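/- If (A,B) is stabilizable, then the algebraic Riccati equation PA + AᵀP - PBBᵀP + I = 0 admits a symmetric positive definite solution P. -/

import Mathlib

open Matrix

/-!
If `M` is Hurwitz, the Cayley transform turns the Lyapunov equation `Mᴴ P + P M + Q = 0` into a
Stein equation `P = Cᴴ P C + Q'` with `Cᵏ → 0`, so `Q ≥ 0` forces `P ≥ 0`. Applied to `±P` with
`Q = 0` this gives uniqueness, hence existence by a dimension count.

Completing the square, the Riccati expression at `P` equals
`(A + B F)ᴴ P + P (A + B F) + (Q + Fᴴ F) - (F + Bᴴ P)ᴴ (F + Bᴴ P)` for every feedback `F`. Hence the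
Lyapunov solution of any stabilizing `F` is a supersolution. Conversely, for a positive semidefinite
supersolution `P` the choice `F = -Bᴴ P` shows that `A - B Bᴴ P` is Hurwitz, and the Lyapunov
solution `P'` of this feedback (one Newton step) is a supersolution below `P`. Starting from the
supersolution of least trace, `P' = P`, and then the square `F + Bᴴ P'` vanishes.
-/

section Hurwitz

open Filter Topology

/-- An element of a complex algebra is *Hurwitz* if its spectrum lies in the open left half-plane.
A matrix over a subfield of `ℂ` is Hurwitz if its image over `ℂ` is. -/
def IsHurwitz {R : Type*} [Ring R] [Algebra ℂ R] (a : R) : Prop :=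
  ∀ z ∈ spectrum ℂ a, z.re < 0

/-- The Cayley transform `(1 + a) (1 - a)⁻¹`, which maps the left half-plane to the unit disc. It is
written as `2 (1 - a)⁻¹ - 1`, and is `-1` if `1 - a` is not invertible. -/
noncomputable def cayley {R : Type*} [Ring R] (a : R) : R :=
  2 * Ring.inverse (1 - a) - 1

theorem norm_two_mul_sub_one_lt_one {t : ℂ} (ht : (1 - t⁻¹).re < 0) : ‖2 * t - 1‖ < 1 := by
  have ht₀ : t ≠ 0 := by
    rintro rfl
    norm_num at ht
  have hre : Complex.normSq t < t.re := by
    rwa [Complex.sub_re, Complex.one_re, Complex.inv_re, sub_neg,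
      one_lt_div (Complex.normSq_pos.2 ht₀)] at ht
  rw [← sq_lt_one_iff₀ (norm_nonneg _), Complex.sq_norm]
  simp only [Complex.normSq_apply, Complex.sub_re, Complex.mul_re, Complex.re_ofNat,
    Complex.im_ofNat, Complex.one_re, Complex.sub_im, Complex.mul_im, Complex.one_im] at hre ⊢
  linarith

namespace IsHurwitz

variable {R : Type*} [Ring R] [Algebra ℂ R] {a : R}

theorem isUnit_one_sub (ha : IsHurwitz a) : IsUnit (1 - a) := by
  have h : (1 : ℂ) ∉ spectrum ℂ a := fun h => (ha 1 h).not_gt (by norm_num)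
  rwa [spectrum.notMem_iff, map_one] at h

theorem norm_lt_one_of_mem_spectrum_cayley (ha : IsHurwitz a) {z : ℂ}
    (hz : z ∈ spectrum ℂ (cayley a)) : ‖z‖ < 1 := by
  obtain ⟨u, hu⟩ := ha.isUnit_one_sub
  have ht : (z + 1) / 2 ∈ spectrum ℂ (↑u⁻¹ : R) := by
    rw [spectrum.mem_iff] at hz ⊢
    contrapose! hz
    have h2 : algebraMap ℂ R z - cayley a =
        algebraMap ℂ R 2 * (algebraMap ℂ R ((z + 1) / 2) - ↑u⁻¹) := by
      rw [cayley, ← hu, Ring.inverse_unit, mul_sub, ← map_mul, mul_div_cancel₀ _ two_ne_zero,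
        map_add, map_one, map_ofNat]
      abel
    rw [h2]
    exact ((IsUnit.mk0 _ two_ne_zero).map _).mul hz
  have ha' : 1 - ((z + 1) / 2)⁻¹ ∈ spectrum ℂ a := by
    rw [← sub_sub_cancel 1 a, ← hu, ← map_one (algebraMap ℂ R), ← spectrum.singleton_sub_eq]
    exact Set.sub_mem_sub rfl (spectrum.inv₀_mem ht)
  simpa [mul_div_cancel₀] using norm_two_mul_sub_one_lt_one (ha _ ha')

end IsHurwitz

theorem tendsto_pow_zero_of_spectrum_norm_lt_one {R : Type*} [NormedRing R] [NormedAlgebra ℂ R]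
    [CompleteSpace R] {a : R} (ha : ∀ z ∈ spectrum ℂ a, ‖z‖ < 1) :
    Tendsto (fun k : ℕ => a ^ k) atTop (𝓝 0) := by
  rcases subsingleton_or_nontrivial R with _ | _
  · simpa only [Subsingleton.elim _ (0 : R)] using tendsto_const_nhds
  have hρ : spectralRadius ℂ a < (1 : NNReal) :=
    spectrum.spectralRadius_lt_of_forall_lt a fun z hz => by exact_mod_cast ha z hz
  obtain ⟨r, hρr, hr⟩ := ENNReal.lt_iff_exists_nnreal_btwn.1 hρ
  have hroot :=
    (spectrum.pow_nnnorm_pow_one_div_tendsto_nhds_spectralRadius a).eventually_lt_const hρr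
  refine squeeze_zero_norm' ?_ (tendsto_pow_atTop_nhds_zero_of_lt_one r.2 (by exact_mod_cast hr))
  filter_upwards [hroot, eventually_gt_atTop 0] with k hk hk₀
  have hpow : (‖a ^ k‖₊ : ENNReal) ≤ (r : ENNReal) ^ k := by
    rw [← ENNReal.rpow_natCast, ← ENNReal.rpow_inv_le_iff (by positivity), ← one_div]
    exact hk.le
  exact_mod_cast hpow

end Hurwitz

section Lyapunov

open Filter Topology

theorem stein_cayley_of_lyapunov {R : Type*} [Ring R] [StarRing R] {m p q : R}
    (hm : IsUnit (1 - m)) (h : star m * p + p * m + q = 0) :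
    p = star (cayley m) * p * cayley m +
      2 * (star (Ring.inverse (1 - m)) * q * Ring.inverse (1 - m)) := by
  set r := Ring.inverse (1 - m) with hr
  have hmr : m * r = r - 1 := by
    rw [eq_sub_iff_add_eq, ← eq_sub_iff_add_eq', ← Ring.mul_inverse_cancel _ hm, ← hr, sub_mul,
      one_mul]
  have hrm : star r * star m = star r - 1 := by rw [← star_mul, hmr, star_sub, star_one]
  have hconj : (star r - 1) * p * r + star r * p * (r - 1) + star r * q * r = 0 := by
    rw [← hrm, ← hmr]
    linear_combination (norm := noncomm_ring) star r * h * r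
  have hc : star (cayley m) = 2 * star r - 1 := by
    rw [cayley, star_sub, star_mul, star_one, star_ofNat, ← hr]
    noncomm_ring
  rw [hc, cayley, ← hr]
  linear_combination (norm := noncomm_ring) (-2 : ℤ) • hconj

theorem nonneg_of_stein {R : Type*} [Ring R] [StarRing R] [PartialOrder R] [StarOrderedRing R]
    [TopologicalSpace R] [ContinuousMul R] [ContinuousStar R] [OrderClosedTopology R]
    {c p q : R} (hc : Tendsto (fun k : ℕ => c ^ k) atTop (𝓝 0)) (hq : 0 ≤ q)
    (h : p = star c * p * c + q) : 0 ≤ p := by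
  have hk (k : ℕ) : star (c ^ k) * p * c ^ k ≤ p := by
    induction k with
    | zero => simp
    | succ k ih =>
      calc star (c ^ (k + 1)) * p * c ^ (k + 1)
          = star c * (star (c ^ k) * p * c ^ k) * c := by
            simp only [pow_succ, star_mul, mul_assoc]
        _ ≤ star c * p * c := star_left_conjugate_le_conjugate ih c
        _ ≤ p := by
          conv_rhs => rw [h]
          exact le_add_of_nonneg_right hq
  have hlim : Tendsto (fun k => star (c ^ k) * p * c ^ k) atTop (𝓝 (star 0 * p * 0)) :=
    (hc.star.mul_const p).mul hc
  simpa using le_of_tendsto' hlim hk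

theorem IsHurwitz.nonneg_of_lyapunov {R : Type*} [CStarAlgebra R] [PartialOrder R]
    [StarOrderedRing R] {m p q : R} (hm : IsHurwitz m) (hq : 0 ≤ q)
    (h : star m * p + p * m + q = 0) : 0 ≤ p := by
  refine nonneg_of_stein (tendsto_pow_zero_of_spectrum_norm_lt_one fun z hz =>
    hm.norm_lt_one_of_mem_spectrum_cayley hz) ?_ (stein_cayley_of_lyapunov hm.isUnit_one_sub h)
  rw [two_mul]
  have := star_left_conjugate_nonneg hq (Ring.inverse (1 - m))
  exact add_nonneg this this

end Lyapunov

section Matrix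

open scoped ComplexOrder MatrixOrder

variable {𝕜 ι κ : Type*} [RCLike 𝕜]

section Embedding

variable (φ : 𝕜 →⋆ₐ[ℝ] ℂ)

theorem starAlgHom_nonneg_iff {x : 𝕜} : 0 ≤ φ x ↔ 0 ≤ x := by
  have hφ (r : ℝ) : φ r = r := φ.toAlgHom.commutes r
  refine ⟨fun h => ?_, fun h => ?_⟩
  · obtain ⟨r, hr, hrx⟩ := RCLike.nonneg_iff_exists_ofReal.1 h
    have hx : (r : 𝕜) = x := (φ : 𝕜 →+* ℂ).injective ((hφ r).trans hrx)
    exact RCLike.nonneg_iff_exists_ofReal.2 ⟨r, hr, hx⟩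
  · obtain ⟨r, hr, rfl⟩ := RCLike.nonneg_iff_exists_ofReal.1 h
    exact RCLike.nonneg_iff_exists_ofReal.2 ⟨r, hr, (hφ r).symm⟩

theorem conjTranspose_map_starAlgHom (M : Matrix ι κ 𝕜) : Mᴴ.map φ = (M.map φ)ᴴ :=
  conjTranspose_map φ fun x => map_star φ x

theorem posSemidef_map_starAlgHom_iff [Finite ι] {P : Matrix ι ι 𝕜} :
    (P.map φ).PosSemidef ↔ P.PosSemidef := by
  classical
  cases nonempty_fintype ι
  refine ⟨fun h => .of_dotProduct_mulVec_nonneg ?_ fun x => ?_, fun h => ?_⟩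
  · exact (isHermitian_map_iff (map_star φ) (φ : 𝕜 →+* ℂ).injective).1 h.isHermitian
  · have hform : φ (star x ⬝ᵥ P *ᵥ x) = star (φ ∘ x) ⬝ᵥ P.map φ *ᵥ (φ ∘ x) := by
      simp [dotProduct, mulVec, ← map_star]
    rw [← starAlgHom_nonneg_iff φ, hform]
    exact h.dotProduct_mulVec_nonneg _
  · obtain ⟨C, rfl⟩ := CStarAlgebra.nonneg_iff_eq_star_mul_self.1 h.nonneg
    have hmap : (star C * C).map φ = (C.map φ)ᴴ * C.map φ := by
      rw [← conjTranspose_map_starAlgHom]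
      exact Matrix.map_mul (f := (φ : 𝕜 →+* ℂ))
    exact hmap ▸ posSemidef_conjTranspose_mul_self _

theorem posDef_map_starAlgHom [Finite ι] {P : Matrix ι ι 𝕜} (hP : P.PosDef) :
    (P.map φ).PosDef := by
  classical
  cases nonempty_fintype ι
  exact ((posSemidef_map_starAlgHom_iff φ).2 hP.posSemidef).posDef_iff_isUnit.2
    (hP.isUnit.map (φ : 𝕜 →+* ℂ).mapMatrix)

theorem lyapunov_map_starAlgHom [Fintype ι] {M P Q : Matrix ι ι 𝕜}
    (h : Mᴴ * P + P * M + Q = 0) :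
    (M.map φ)ᴴ * P.map φ + P.map φ * M.map φ + Q.map φ = 0 := by
  classical
  rw [← conjTranspose_map_starAlgHom]
  have := congrArg (φ : 𝕜 →+* ℂ).mapMatrix h
  rwa [map_add, map_add, map_mul, map_mul, map_zero] at this

end Embedding

section MatrixLyapunov

variable [Fintype ι] [DecidableEq ι] {φ : 𝕜 →⋆ₐ[ℝ] ℂ} {M P Q : Matrix ι ι 𝕜}

open scoped Matrix.Norms.L2Operator in
theorem posSemidef_of_lyapunov (hM : IsHurwitz (M.map φ)) (hQ : Q.PosSemidef)
    (h : Mᴴ * P + P * M + Q = 0) : P.PosSemidef :=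
  (posSemidef_map_starAlgHom_iff φ).1
    (hM.nonneg_of_lyapunov ((posSemidef_map_starAlgHom_iff φ).2 hQ).nonneg
      (lyapunov_map_starAlgHom φ h)).posSemidef

theorem eq_zero_of_lyapunov (hM : IsHurwitz (M.map φ)) (h : Mᴴ * P + P * M = 0) : P = 0 := by
  have hP : P.PosSemidef := posSemidef_of_lyapunov hM .zero (by rw [h, add_zero])
  have hP' : (-P).PosSemidef := posSemidef_of_lyapunov hM .zero <| by
    rw [mul_neg, neg_mul, ← neg_add, h, neg_zero, add_zero]
  exact le_antisymm (neg_nonneg.1 hP'.nonneg) hP.nonneg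

theorem exists_lyapunov (hM : IsHurwitz (M.map φ)) (hQ : Q.PosSemidef) :
    ∃ P : Matrix ι ι 𝕜, P.PosSemidef ∧ Mᴴ * P + P * M + Q = 0 := by
  let L : Matrix ι ι 𝕜 →ₗ[𝕜] Matrix ι ι 𝕜 := LinearMap.mulLeft 𝕜 Mᴴ + LinearMap.mulRight 𝕜 M
  have hL : Function.Injective L :=
    (injective_iff_map_eq_zero L).2 fun P hP => eq_zero_of_lyapunov hM hP
  obtain ⟨P, hP⟩ := LinearMap.surjective_of_injective hL (-Q)
  have h : Mᴴ * P + P * M + Q = 0 := eq_neg_iff_add_eq_zero.1 hP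
  exact ⟨P, posSemidef_of_lyapunov hM hQ h, h⟩

theorem exists_mulVec_eq_smul_of_mem_spectrum {K : Type*} [Field K] {M : Matrix ι ι K}
    {z : K} (hz : z ∈ spectrum K M) : ∃ v ≠ 0, M *ᵥ v = z • v := by
  rw [← spectrum_toLin', ← Module.End.hasEigenvalue_iff_mem_spectrum] at hz
  obtain ⟨v, hv⟩ := hz.exists_hasEigenvector
  exact ⟨v, hv.2, by simpa using hv.apply_eq_smul⟩

theorem isHurwitz_of_lyapunov_complex {M P Q : Matrix ι ι ℂ} (hP : P.PosSemidef) (hQ : Q.PosDef)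
    (h : Mᴴ * P + P * M + Q = 0) : IsHurwitz M := by
  intro z hz
  obtain ⟨v, hv₀, hv⟩ := exists_mulVec_eq_smul_of_mem_spectrum hz
  have hv' : star v ᵥ* Mᴴ = star z • star v := by rw [← star_mulVec, hv, star_smul]
  have hform : (star z + z) * (star v ⬝ᵥ P *ᵥ v) + star v ⬝ᵥ Q *ᵥ v = 0 := by
    calc _ = star v ⬝ᵥ (Mᴴ * P + P * M + Q) *ᵥ v := by
          rw [add_mulVec, add_mulVec, ← mulVec_mulVec, ← mulVec_mulVec, dotProduct_add,
            dotProduct_add, dotProduct_mulVec _ Mᴴ, hv', hv, mulVec_smul, smul_dotProduct,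
            dotProduct_smul, smul_eq_mul, smul_eq_mul, add_mul]
      _ = 0 := by rw [h, zero_mulVec, dotProduct_zero]
  have hPv := Complex.nonneg_iff.1 (hP.dotProduct_mulVec_nonneg v)
  have hQv := Complex.pos_iff.1 (hQ.dotProduct_mulVec_pos hv₀)
  have hre : 2 * z.re * (star v ⬝ᵥ P *ᵥ v).re + (star v ⬝ᵥ Q *ᵥ v).re = 0 := by
    simpa [← hPv.2, ← two_mul] using congrArg Complex.re hform
  nlinarith only [hPv.1, hQv.1, hre]

theorem isHurwitz_of_lyapunov (hP : P.PosSemidef) (hQ : Q.PosDef)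
    (h : Mᴴ * P + P * M + Q = 0) : IsHurwitz (M.map φ) :=
  isHurwitz_of_lyapunov_complex ((posSemidef_map_starAlgHom_iff φ).2 hP)
    (posDef_map_starAlgHom φ hQ) (lyapunov_map_starAlgHom φ h)

end MatrixLyapunov

section Trace

open Set
open scoped Matrix.Norms.Frobenius

theorem isClosed_setOf_posSemidef [Finite ι] : IsClosed {P : Matrix ι ι 𝕜 | P.PosSemidef} := by
  cases nonempty_fintype ι
  simp only [posSemidef_iff_dotProduct_mulVec, IsHermitian, ofPred_and, ofPred_forall]
  refine (isClosed_eq (by fun_prop) continuous_id).inter (isClosed_iInter fun x => ?_)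
  exact isClosed_le continuous_const (by fun_prop)

variable [Fintype ι]

theorem frobenius_norm_sq_eq_re_trace [Fintype κ] (C : Matrix κ ι 𝕜) :
    ‖C‖ ^ 2 = RCLike.re (Cᴴ * C).trace := by
  rw [frobenius_norm_def, ← Real.sqrt_eq_rpow, Real.sq_sqrt (by positivity), Finset.sum_comm]
  simp [trace, Matrix.mul_apply, RCLike.conj_mul]

theorem frobenius_norm_le_re_trace {P : Matrix ι ι 𝕜} (hP : P.PosSemidef) :
    ‖P‖ ≤ RCLike.re P.trace := by
  classical
  obtain ⟨C, rfl⟩ := CStarAlgebra.nonneg_iff_eq_star_mul_self.1 hP.nonneg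
  calc ‖Cᴴ * C‖ ≤ ‖Cᴴ‖ * ‖C‖ := frobenius_norm_mul _ _
    _ = RCLike.re (Cᴴ * C).trace := by
      rw [frobenius_norm_conjTranspose, ← sq, frobenius_norm_sq_eq_re_trace]

theorem exists_isMinOn_re_trace {S : Set (Matrix ι ι 𝕜)} (hS : IsClosed S) (hne : S.Nonempty)
    (hpos : ∀ P ∈ S, P.PosSemidef) : ∃ P ∈ S, IsMinOn (fun P => RCLike.re P.trace) S P := by
  obtain ⟨P₀, hP₀⟩ := hne
  have : ProperSpace (Matrix ι ι 𝕜) := FiniteDimensional.proper_rclike 𝕜 _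
  refine ContinuousOn.exists_isMinOn' (by fun_prop) hS hP₀ ?_
  rw [Filter.eventually_inf_principal]
  filter_upwards [tendsto_norm_cocompact_atTop.eventually_ge_atTop (RCLike.re P₀.trace)] with P h hP
  exact h.trans (frobenius_norm_le_re_trace (hpos P hP))

end Trace

section Riccati

variable [Fintype ι] [Fintype κ]

/-- The left-hand side of the algebraic Riccati equation `riccati A B Q P = 0` with state weight `Q`
and unit input weight. -/
def riccati (A : Matrix ι ι 𝕜) (B : Matrix ι κ 𝕜) (Q P : Matrix ι ι 𝕜) : Matrix ι ι 𝕜 :=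
  P * A + Aᴴ * P - P * B * Bᴴ * P + Q

/-- A positive semidefinite supersolution of the Riccati equation, i.e. `riccati A B Q P ≤ 0` in the
Loewner order. -/
def IsRiccatiSupersolution (A : Matrix ι ι 𝕜) (B : Matrix ι κ 𝕜) (Q P : Matrix ι ι 𝕜) : Prop :=
  P.PosSemidef ∧ (-riccati A B Q P).PosSemidef

variable {A : Matrix ι ι 𝕜} {B : Matrix ι κ 𝕜} {Q P : Matrix ι ι 𝕜}

theorem riccati_eq_lyapunov_sub (hP : P.IsHermitian) (F : Matrix κ ι 𝕜) :
    riccati A B Q P = (A + B * F)ᴴ * P + P * (A + B * F) + (Q + Fᴴ * F) -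
      (F + Bᴴ * P)ᴴ * (F + Bᴴ * P) := by
  simp only [riccati, conjTranspose_add, conjTranspose_mul, conjTranspose_conjTranspose, hP.eq,
    Matrix.add_mul, Matrix.mul_add, Matrix.mul_assoc]
  abel

theorem neg_riccati_eq_of_lyapunov (hP : P.IsHermitian) {F : Matrix κ ι 𝕜}
    (h : (A + B * F)ᴴ * P + P * (A + B * F) + (Q + Fᴴ * F) = 0) :
    -riccati A B Q P = (F + Bᴴ * P)ᴴ * (F + Bᴴ * P) := by
  rw [riccati_eq_lyapunov_sub hP F, h, zero_sub, neg_neg]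

theorem isRiccatiSupersolution_of_lyapunov (hP : P.PosSemidef) {F : Matrix κ ι 𝕜}
    (h : (A + B * F)ᴴ * P + P * (A + B * F) + (Q + Fᴴ * F) = 0) :
    IsRiccatiSupersolution A B Q P :=
  ⟨hP, neg_riccati_eq_of_lyapunov hP.isHermitian h ▸ posSemidef_conjTranspose_mul_self _⟩

theorem isClosed_setOf_isRiccatiSupersolution :
    IsClosed {P | IsRiccatiSupersolution A B Q P} := by
  refine isClosed_setOf_posSemidef.inter (isClosed_setOf_posSemidef.preimage ?_)
  unfold riccati
  fun_prop

theorem posDef_of_riccati_eq_zero (hQ : Q.PosDef) (hP : P.PosSemidef)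
    (h : riccati A B Q P = 0) : P.PosDef := by
  refine .of_dotProduct_mulVec_pos hP.isHermitian fun x hx => ?_
  refine (hP.dotProduct_mulVec_nonneg x).lt_of_ne fun hx₀ => ?_
  have hPx : P *ᵥ x = 0 := (hP.dotProduct_mulVec_zero_iff x).1 hx₀.symm
  have hxP : star x ᵥ* P = 0 := by rw [← hP.isHermitian.eq, ← star_mulVec, hPx, star_zero]
  have hform : star x ⬝ᵥ riccati A B Q P *ᵥ x = star x ⬝ᵥ Q *ᵥ x := by
    simp only [riccati, add_mulVec, sub_mulVec, ← mulVec_mulVec, hPx, mulVec_zero, add_zero,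
      sub_zero, dotProduct_add, dotProduct_mulVec _ P, hxP, zero_dotProduct, zero_add]
  exact (hQ.dotProduct_mulVec_pos hx).ne' (by rw [← hform, h, zero_mulVec, dotProduct_zero])

theorem IsRiccatiSupersolution.exists_newton (φ : 𝕜 →⋆ₐ[ℝ] ℂ)
    (hP : IsRiccatiSupersolution A B Q P) (hQ : Q.PosDef) :
    ∃ P', IsRiccatiSupersolution A B Q P' ∧ (P - P').PosSemidef ∧
      -riccati A B Q P' = (Bᴴ * (P' - P))ᴴ * (Bᴴ * (P' - P)) := by
  classical
  let F := -(Bᴴ * P)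
  have hFF : (Fᴴ * F).PosSemidef := posSemidef_conjTranspose_mul_self F
  have hlyap : (A + B * F)ᴴ * P + P * (A + B * F) + (Q + Fᴴ * F + -riccati A B Q P) = 0 := by
    rw [riccati_eq_lyapunov_sub hP.1.isHermitian F, neg_add_cancel, conjTranspose_zero,
      Matrix.zero_mul, sub_zero]
    abel
  have hM : IsHurwitz ((A + B * F).map φ) :=
    isHurwitz_of_lyapunov hP.1 ((hQ.add_posSemidef hFF).add_posSemidef hP.2) hlyap
  obtain ⟨P', hP', h'⟩ := exists_lyapunov hM (hQ.posSemidef.add hFF)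
  refine ⟨P', isRiccatiSupersolution_of_lyapunov hP' h', ?_, ?_⟩
  · refine posSemidef_of_lyapunov hM hP.2 ?_
    linear_combination (norm := noncomm_ring) hlyap - h'
  · rw [neg_riccati_eq_of_lyapunov hP'.isHermitian h', neg_add_eq_sub, ← Matrix.mul_sub]

variable [DecidableEq ι] {φ : 𝕜 →⋆ₐ[ℝ] ℂ}

theorem exists_isRiccatiSupersolution (hQ : Q.PosSemidef) {F : Matrix κ ι 𝕜}
    (hF : IsHurwitz ((A + B * F).map φ)) : ∃ P, IsRiccatiSupersolution A B Q P := by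
  obtain ⟨P, hP, h⟩ := exists_lyapunov hF (hQ.add (posSemidef_conjTranspose_mul_self F))
  exact ⟨P, isRiccatiSupersolution_of_lyapunov hP h⟩

open scoped Matrix.Norms.Frobenius in
theorem exists_posSemidef_riccati_eq_zero (hQ : Q.PosDef) {F : Matrix κ ι 𝕜}
    (hF : IsHurwitz ((A + B * F).map φ)) : ∃ P, P.PosSemidef ∧ riccati A B Q P = 0 := by
  obtain ⟨P, hP, hmin⟩ := exists_isMinOn_re_trace isClosed_setOf_isRiccatiSupersolution
    (exists_isRiccatiSupersolution hQ.posSemidef hF) fun _ h => h.1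
  obtain ⟨P', hP', hle, hric⟩ := hP.exists_newton φ hQ
  have htrace : RCLike.re (P - P').trace ≤ 0 := by
    rw [trace_sub, map_sub, sub_nonpos]
    exact hmin hP'
  obtain rfl : P = P' :=
    sub_eq_zero.1 (norm_le_zero_iff.1 ((frobenius_norm_le_re_trace hle).trans htrace))
  refine ⟨P, hP.1, ?_⟩
  rw [← neg_eq_zero, hric, sub_self, Matrix.mul_zero, Matrix.mul_zero]

end Riccati

end Matrix

open scoped ComplexOrder in
theorem are_solution_exists_general {𝕜 ι κ : Type*} [RCLike 𝕜] [Fintype ι] [DecidableEq ι]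
    [Fintype κ] (φ : 𝕜 →⋆ₐ[ℝ] ℂ) (A : Matrix ι ι 𝕜) (B : Matrix ι κ 𝕜) {Q : Matrix ι ι 𝕜}
    (hQ : Q.PosDef) (hstab : ∃ F : Matrix κ ι 𝕜, IsHurwitz ((A + B * F).map φ)) :
    ∃ P : Matrix ι ι 𝕜, P.PosDef ∧ P * A + Aᴴ * P - P * B * Bᴴ * P + Q = 0 := by
  obtain ⟨F, hF⟩ := hstab
  obtain ⟨P, hP, hric⟩ := exists_posSemidef_riccati_eq_zero hQ hF
  exact ⟨P, posDef_of_riccati_eq_zero hQ hP hric, hric⟩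

/-- If `(A,B)` is stabilizable, then the ARE `PA + AᵀP - PBBᵀP + I = 0` admits a symmetric
positive definite solution `P`. -/
theorem are_solution_exists {n p : ℕ}
    (A : Matrix (Fin n) (Fin n) ℝ) (B : Matrix (Fin n) (Fin p) ℝ)
    (hstab : ∃ F : Matrix (Fin p) (Fin n) ℝ,
      ∀ z ∈ spectrum ℂ ((A + B * F).map (algebraMap ℝ ℂ)), z.re < 0) :
    ∃ P : Matrix (Fin n) (Fin n) ℝ, P.PosDef ∧ P.IsSymm ∧
      P * A + A.transpose * P - P * B * B.transpose * P + 1 = 0 := by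
  obtain ⟨P, hP, hric⟩ := are_solution_exists_general (.ofId ℝ ℂ) A B .one hstab
  exact ⟨P, hP, hP.isHermitian, hric⟩
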